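/- arXiv:2009.07248 — 2 statements merged into one kernel-verified Lean document; each statement's English description precedes it below -/
import Mathlib

section
/- Assume min_{i∈N} w_i = 3. For every bijection π* : N → {1,…,n}, there exists an LP-feasible vector x with Σ_{k=1}^{K−1} Σ_{i∈L_{k+1}} q_{i,k}·x_{i,k} ≥ (1−5ε)·Ψ_light(π*). -/
/-!
Write `C` for the completion times of the given permutation, and let `S_k` be the set of items
that are `k`-light and complete in `I_k`. Since all weights are at least `3 > ε² (1 + ε)`, the sets
`S_0` and `S_1` are empty. An item of `S_{k+1}` completes after `(1+ε)^k`, so placing it in bucket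
`B_k` earns at least its profit in the permutation (`itemProfit_le_qProfit`).

The items of `S_{k+1}` following the first one are processed inside `I_{k+1}`, and the first one
is light, so the weight of `S_{k+1}` is at most
`ε (1+ε)^k + ε² (1+ε)^{k+1}` (`sum_lightIn_le`). This exceeds the capacity `ε (1+ε)^{k-1}` of `B_k`
only by the factor `(1+ε) + ε (1+ε)²`, which is at most `1 / (1 - 5ε)` when `ε < 1/5`. Hence assigning the fraction
`max 0 (1 - 5ε)` of each item of `S_{k+1}` to `B_k` is LP-feasible, and it collects that fraction
of `Ψ_light`.
-/

open Finset

noncomputable section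
open scoped Classical

namespace GIK

variable {n : ℕ}

/-- Profit `Φ` of a chain `S : ℕ → Finset (Fin n)` (convention `S 0 = ∅`). -/
def chainProfit (T : ℕ) (p : Fin n → ℕ → ℝ) (S : ℕ → Finset (Fin n)) : ℝ :=
  ∑ t ∈ Finset.Icc 1 T, ∑ i ∈ S t \ S (t - 1), p i t

/-- `S` is a chain: `S 0 = ∅` and the sets are nested along `0,…,T`. -/
def IsChainGIK (T : ℕ) (S : ℕ → Finset (Fin n)) : Prop :=
  S 0 = ∅ ∧ ∀ t < T, S t ⊆ S (t + 1)

/-- Feasible chain: a chain whose total weight fits each period's capacity. -/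
def FeasibleChain (T : ℕ) (w : Fin n → ℝ) (W : ℕ → ℝ) (S : ℕ → Finset (Fin n)) : Prop :=
  IsChainGIK T S ∧ ∀ t ∈ Finset.Icc 1 T, ∑ i ∈ S t, w i ≤ W t

/-- `π` is a bijection from `Q` onto `{1, …, |Q|}`. -/
def IsPerm (Q : Finset (Fin n)) (π : Fin n → ℕ) : Prop :=
  Set.BijOn π ↑Q ↑(Finset.Icc 1 Q.card)

/-- Completion time `C_π(i)` of item `i` in a permutation `π` of `Q`. -/
def comp (w : Fin n → ℝ) (Q : Finset (Fin n)) (π : Fin n → ℕ) (i : Fin n) : ℝ :=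
  ∑ j ∈ Q.filter (fun j => π j ≤ π i), w j

/-- Profit `φ_π(i)` of item `i` under a permutation `π` of `Q`:
the best profit `p i t` over periods `t ∈ {1,…,T}` whose capacity is at least `C_π(i)`,
where the fictitious period `T+1` (infinite capacity, zero profit) is accounted for
by inserting `0` into the maximum. -/
def itemProfit (T : ℕ) (w : Fin n → ℝ) (W : ℕ → ℝ) (p : Fin n → ℕ → ℝ)
    (Q : Finset (Fin n)) (π : Fin n → ℕ) (i : Fin n) : ℝ :=
  (insert (0 : ℝ)
      (((Finset.Icc 1 T).filter (fun t => comp w Q π i ≤ W t)).image (fun t => p i t))).max'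
    (Finset.insert_nonempty _ _)

/-- Total profit `Ψ(π)` of a permutation `π` of `Q`. -/
def permProfit (T : ℕ) (w : Fin n → ℝ) (W : ℕ → ℝ) (p : Fin n → ℕ → ℝ)
    (Q : Finset (Fin n)) (π : Fin n → ℕ) : ℝ :=
  ∑ i ∈ Q, itemProfit T w W p Q π i

/-- Insertion time of item `i` in a chain `S` (equal to `T+1` if `i` is never inserted). -/
def insTime (T : ℕ) (S : ℕ → Finset (Fin n)) (i : Fin n) : ℕ :=
  if h : ((Finset.Icc 1 T).filter (fun t => i ∈ S t)).Nonempty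
  then ((Finset.Icc 1 T).filter (fun t => i ∈ S t)).min' h
  else T + 1

/-- `K = ⌈log_{1+ε} (Σ_i w_i)⌉`. -/
def Kof (w : Fin n → ℝ) (ε : ℝ) : ℕ := ⌈Real.logb (1 + ε) (∑ i, w i)⌉₊

/-- Membership of `x` in the interval `I_k` (`I_0 = [0,1]`, `I_k = ((1+ε)^{k-1}, (1+ε)^k]`). -/
def inInterval (ε : ℝ) (k : ℕ) (x : ℝ) : Prop :=
  if k = 0 then x ∈ Set.Icc (0 : ℝ) 1
  else x ∈ Set.Ioc ((1 + ε) ^ (k - 1)) ((1 + ε) ^ k)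

/-- Item `i` is `k`-heavy: `w i ≥ ε² (1+ε)^k`. -/
def Heavy (w : Fin n → ℝ) (ε : ℝ) (k : ℕ) (i : Fin n) : Prop :=
  ε ^ 2 * (1 + ε) ^ k ≤ w i

/-- `Ψ_heavy(π)` for a permutation `π` of all items. -/
def psiHeavy (T : ℕ) (w : Fin n → ℝ) (W : ℕ → ℝ) (p : Fin n → ℕ → ℝ) (ε : ℝ)
    (π : Fin n → ℕ) : ℝ :=
  ∑ k ∈ Finset.range (Kof w ε + 1),
    ∑ i ∈ Finset.univ.filter
        (fun i : Fin n => Heavy w ε k i ∧ inInterval ε k (comp w Finset.univ π i)),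
      itemProfit T w W p Finset.univ π i

/-- `Ψ_light(π)` for a permutation `π` of all items. -/
def psiLight (T : ℕ) (w : Fin n → ℝ) (W : ℕ → ℝ) (p : Fin n → ℕ → ℝ) (ε : ℝ)
    (π : Fin n → ℕ) : ℝ :=
  ∑ k ∈ Finset.range (Kof w ε + 1),
    ∑ i ∈ Finset.univ.filter
        (fun i : Fin n => ¬ Heavy w ε k i ∧ inInterval ε k (comp w Finset.univ π i)),
      itemProfit T w W p Finset.univ π i

/-- A pair `(S, π)` is bulky: `π` is a bijection `S → {1,…,|S|}` and every item whose
completion time lies in `I_k` is `k`-heavy. -/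
def Bulky (w : Fin n → ℝ) (ε : ℝ) (S : Finset (Fin n)) (π : Fin n → ℕ) : Prop :=
  IsPerm S π ∧
    ∀ k ∈ Finset.range (Kof w ε + 1), ∀ i ∈ S,
      inInterval ε k (comp w S π i) → Heavy w ε k i

/-- Capacity of bucket `B_k`. -/
def bucketCap (ε : ℝ) (k : ℕ) : ℝ := (1 + ε) ^ k - (1 + ε) ^ (k - 1)

/-- Assignment profit `q_{i,k}`. -/
def qProfit (T : ℕ) (W : ℕ → ℝ) (p : Fin n → ℕ → ℝ) (ε : ℝ) (i : Fin n) (k : ℕ) : ℝ :=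
  (insert (0 : ℝ)
      (((Finset.Icc 1 T).filter (fun t => (1 + ε) ^ k ≤ W t)).image (fun t => p i t))).max'
    (Finset.insert_nonempty _ _)

/-- LP feasibility of an assignment vector `x` (indices `k ∈ {1,…,K-1}`, `i ∈ L_{k+1}`). -/
def LPfeasible (w : Fin n → ℝ) (ε : ℝ) (x : Fin n → ℕ → ℝ) : Prop :=
  (∀ i : Fin n, ∀ k ∈ Finset.Icc 1 (Kof w ε - 1), ¬ Heavy w ε (k + 1) i → 0 ≤ x i k) ∧
  (∀ i : Fin n,
      ∑ k ∈ (Finset.Icc 1 (Kof w ε - 1)).filter (fun k => ¬ Heavy w ε (k + 1) i),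
        x i k ≤ 1) ∧
  (∀ k ∈ Finset.Icc 1 (Kof w ε - 1),
      ∑ i ∈ Finset.univ.filter (fun i : Fin n => ¬ Heavy w ε (k + 1) i),
        w i * x i k ≤ bucketCap ε k)

/-- IP feasibility: LP feasibility together with integrality. -/
def IPfeasible (w : Fin n → ℝ) (ε : ℝ) (x : Fin n → ℕ → ℝ) : Prop :=
  LPfeasible w ε x ∧
    ∀ i : Fin n, ∀ k ∈ Finset.Icc 1 (Kof w ε - 1), ¬ Heavy w ε (k + 1) i →
      x i k = 0 ∨ x i k = 1

/-- Objective value `Σ_k Σ_{i ∈ L_{k+1}} q_{i,k} x_{i,k}` of an assignment vector. -/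
def assignProfit (T : ℕ) (w : Fin n → ℝ) (W : ℕ → ℝ) (p : Fin n → ℕ → ℝ) (ε : ℝ)
    (x : Fin n → ℕ → ℝ) : ℝ :=
  ∑ k ∈ Finset.Icc 1 (Kof w ε - 1),
    ∑ i ∈ Finset.univ.filter (fun i : Fin n => ¬ Heavy w ε (k + 1) i),
      qProfit T W p ε i k * x i k

/-- Residual capacities `W_t^{-G} = min_{t ≤ τ ≤ T} (W_τ − w(G_τ))`. -/
def resW (T : ℕ) (w : Fin n → ℝ) (W : ℕ → ℝ) (G : ℕ → Finset (Fin n)) (t : ℕ) : ℝ :=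
  if h : (Finset.Icc t T).Nonempty
  then (Finset.Icc t T).inf' h (fun τ => W τ - ∑ i ∈ G τ, w i)
  else 0

/-- Feasible chain for the residual instance `I^{-G}` (item set `N ∖ G_T`,
capacities `resW`). -/
def ResFeasibleChain (T : ℕ) (w : Fin n → ℝ) (W : ℕ → ℝ) (G : ℕ → Finset (Fin n))
    (R : ℕ → Finset (Fin n)) : Prop :=
  IsChainGIK T R ∧ (∀ t ∈ Finset.Icc 1 T, Disjoint (R t) (G T)) ∧
    ∀ t ∈ Finset.Icc 1 T, ∑ i ∈ R t, w i ≤ resW T w W G t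

/-- The instance restricted to item set `N'` is well-spaced with clusters `C 1, …, C M`. -/
def WellSpaced (w : Fin n → ℝ) (ε : ℝ) (N' : Finset (Fin n)) (M : ℕ)
    (C : ℕ → Finset (Fin n)) : Prop :=
  (N' = (Finset.Icc 1 M).biUnion C) ∧
  (∀ m₁ ∈ Finset.Icc 1 M, ∀ m₂ ∈ Finset.Icc 1 M, m₁ ≠ m₂ → Disjoint (C m₁) (C m₂)) ∧
  (∀ m ∈ Finset.Icc 1 M, ∀ i₁ ∈ C m, ∀ i₂ ∈ C m, w i₂ / w i₁ ≤ (n : ℝ) ^ ((1 : ℝ) / ε)) ∧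
  (∀ m₁ ∈ Finset.Icc 1 M, ∀ m₂ ∈ Finset.Icc 1 M, m₁ < m₂ →
    ∀ i₁ ∈ C m₁, ∀ i₂ ∈ C m₂,
      (n : ℝ) ^ (1 + ((m₂ - m₁ - 1 : ℕ) : ℝ) / ε) ≤ w i₂ / w i₁)

/-- `C_{[a,b]} = C_a ∪ ⋯ ∪ C_b`. -/
def clusterUnion (C : ℕ → Finset (Fin n)) (a b : ℕ) : Finset (Fin n) :=
  (Finset.Icc a b).biUnion C

/-- `cross_m(π)`: the number of items of `Q` in clusters `C_{m+1},…,C_M` that appear in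
`π` before the last item of `Q` belonging to `C_m` (zero when `Q ∩ C_m = ∅`). -/
def crossCount (M : ℕ) (C : ℕ → Finset (Fin n)) (Q : Finset (Fin n)) (π : Fin n → ℕ)
    (m : ℕ) : ℕ :=
  ((Q ∩ clusterUnion C (m + 1) M).filter (fun i => π i < (Q ∩ C m).sup π)).card

/-- `cross_{ℳ⁻,ℳ⁺}(π)`: the number of items of `Q` in `ℳ⁺`-indexed clusters appearing in
`π` before the last item of `Q` in `ℳ⁻`-indexed clusters. -/
def crossSets (C : ℕ → Finset (Fin n)) (Mm Mp : Finset ℕ) (Q : Finset (Fin n))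
    (π : Fin n → ℕ) : ℕ :=
  ((Q ∩ Mp.biUnion C).filter (fun i => π i < (Q ∩ Mm.biUnion C).sup π)).card

/-- A pair `(S, π)` is thin: `π` is a permutation of `S` and `cross_m(π) ≤ ⌈log₂ M⌉/ε`
for every `m`. -/
def ThinPair (M : ℕ) (C : ℕ → Finset (Fin n)) (ε : ℝ) (S : Finset (Fin n))
    (π : Fin n → ℕ) : Prop :=
  IsPerm S π ∧
    ∀ m ∈ Finset.Icc 1 M, (crossCount M C S π m : ℝ) ≤ (Nat.clog 2 M : ℝ) / ε

/-- Membership of `(S, π)` in `Thin(m, ψ, Q_{>m})`. -/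
def InThin (T : ℕ) (w : Fin n → ℝ) (W : ℕ → ℝ) (p : Fin n → ℕ → ℝ) (M : ℕ)
    (C : ℕ → Finset (Fin n)) (ε : ℝ) (m : ℕ) (ψ : ℝ) (Qm : Finset (Fin n))
    (S : Finset (Fin n)) (π : Fin n → ℕ) : Prop :=
  ThinPair M C ε S π ∧ S ⊆ clusterUnion C 1 m ∪ Qm ∧ Qm ⊆ S ∧
    ψ ≤ permProfit T w W p S π

end GIK

namespace GIK

variable {n : ℕ}

/-- The items that are `k`-light and complete in `I_k`. -/
def lightIn (w : Fin n → ℝ) (ε : ℝ) (π : Fin n → ℕ) (k : ℕ) : Finset (Fin n) :=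
  Finset.univ.filter
    (fun i : Fin n => ¬ Heavy w ε k i ∧ inInterval ε k (comp w Finset.univ π i))

lemma itemProfit_nonneg (T : ℕ) (w : Fin n → ℝ) (W : ℕ → ℝ) (p : Fin n → ℕ → ℝ)
    (Q : Finset (Fin n)) (π : Fin n → ℕ) (i : Fin n) : 0 ≤ itemProfit T w W p Q π i :=
  Finset.le_max' _ _ (Finset.mem_insert_self _ _)

lemma itemProfit_le_qProfit (T : ℕ) (w : Fin n → ℝ) (W : ℕ → ℝ) (p : Fin n → ℕ → ℝ)
    (ε : ℝ) (Q : Finset (Fin n)) (π : Fin n → ℕ) (i : Fin n) (k : ℕ)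
    (h : (1 + ε) ^ k ≤ comp w Q π i) :
    itemProfit T w W p Q π i ≤ qProfit T W p ε i k := by
  refine Finset.max'_subset _ (Finset.insert_subset_insert _ (Finset.image_subset_image ?_))
  intro t ht
  rw [Finset.mem_filter] at ht ⊢
  exact ⟨ht.1, h.trans ht.2⟩

lemma inInterval_succ {ε : ℝ} {k : ℕ} {x : ℝ} :
    inInterval ε (k + 1) x ↔ (1 + ε) ^ k < x ∧ x ≤ (1 + ε) ^ (k + 1) := by
  simp [inInterval]

/-- The intervals `I_1, I_2, …` are pairwise disjoint. -/
lemma inInterval_succ_unique {ε : ℝ} (hε : 0 < ε) {k l : ℕ} {x : ℝ}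
    (hk : inInterval ε (k + 1) x) (hl : inInterval ε (l + 1) x) : k = l := by
  rw [inInterval_succ] at hk hl
  have h1 : (1 : ℝ) < 1 + ε := by linarith
  have a := (pow_lt_pow_iff_right₀ h1).1 (hk.1.trans_le hl.2)
  have b := (pow_lt_pow_iff_right₀ h1).1 (hl.1.trans_le hk.2)
  omega

lemma lightIn_eq_empty {w : Fin n → ℝ} {ε : ℝ} (hε : ε ∈ Set.Ioo (0 : ℝ) (1/2))
    (hw : ∀ i, 3 ≤ w i) (π : Fin n → ℕ) {k : ℕ} (hk : k ≤ 1) : lightIn w ε π k = ∅ := by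
  obtain ⟨h0, h1⟩ := hε
  refine Finset.filter_eq_empty_iff.2 fun i _ h => h.1 ?_
  have h3 := hw i
  have hp : (1 + ε) ^ k ≤ 2 := by
    interval_cases k
    · norm_num
    · linarith
  have h2 : ε ^ 2 ≤ 1 := by nlinarith
  unfold Heavy
  have : ε ^ 2 * (1 + ε) ^ k ≤ 1 * 2 := by gcongr
  linarith

/-- Apart from its first item, everything in `S_{k+1}` is processed within `I_{k+1}`, whose
length is `ε (1+ε)^k`; the first item is light, which bounds its weight by the second term. -/
lemma sum_lightIn_le {w : Fin n → ℝ} {ε : ℝ} (hε : 0 < ε) (hw : ∀ i, 0 < w i)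
    {π : Fin n → ℕ} (hπ : IsPerm Finset.univ π) (k : ℕ) :
    ∑ i ∈ lightIn w ε π (k + 1), w i
      ≤ ε * (1 + ε) ^ k + ε ^ 2 * (1 + ε) ^ (k + 1) := by
  rcases (lightIn w ε π (k + 1)).eq_empty_or_nonempty with he | hne
  · rw [he, Finset.sum_empty]
    positivity
  obtain ⟨f, hf, hfmin⟩ := Finset.exists_min_image _ π hne
  obtain ⟨l, hl, hlmax⟩ := Finset.exists_max_image _ π hne
  have hinj : ∀ a b, π a = π b → a = b := fun a b h => hπ.injOn (by simp) (by simp) h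
  have hf' := (Finset.mem_filter.1 hf).2
  have hl' := (Finset.mem_filter.1 hl).2
  rw [inInterval_succ] at hf' hl'
  -- The items of `S_{k+1}` other than `f`, and the items completing by `f`, are disjoint sets
  -- of items completing by `l`.
  have hdisj : Disjoint ((lightIn w ε π (k + 1)).erase f)
      (Finset.univ.filter (fun j => π j ≤ π f)) := by
    rw [Finset.disjoint_left]
    intro j hj hj'
    rw [Finset.mem_erase] at hj
    exact hj.1 (hinj _ _ (le_antisymm (Finset.mem_filter.1 hj').2 (hfmin j hj.2)))
  have hsub : ((lightIn w ε π (k + 1)).erase f) ∪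
      (Finset.univ.filter (fun j => π j ≤ π f)) ⊆
      Finset.univ.filter (fun j => π j ≤ π l) := by
    intro j hj
    rw [Finset.mem_filter]
    refine ⟨Finset.mem_univ _, ?_⟩
    rcases Finset.mem_union.1 hj with hj | hj
    · exact hlmax j (Finset.mem_of_mem_erase hj)
    · exact (Finset.mem_filter.1 hj).2.trans (hlmax f hf)
  have hle := Finset.sum_le_sum_of_subset_of_nonneg (f := w) hsub (fun j _ _ => (hw j).le)
  rw [Finset.sum_union hdisj] at hle
  have hwf : w f < ε ^ 2 * (1 + ε) ^ (k + 1) := not_le.1 hf'.1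
  have hadd := Finset.add_sum_erase _ w hf
  have h1 := hf'.2.1
  have h2 := hl'.2.2
  unfold comp at h1 h2
  rw [pow_succ (1 + ε) k] at h2
  linarith

lemma scaled_weight_le_bucketCap {ε : ℝ} (hε : 0 < ε) {k : ℕ} (hk : 1 ≤ k) :
    max 0 (1 - 5 * ε) * (ε * (1 + ε) ^ k + ε ^ 2 * (1 + ε) ^ (k + 1)) ≤ bucketCap ε k := by
  obtain ⟨m, rfl⟩ := Nat.exists_eq_add_of_le' hk
  have hcap : bucketCap ε (m + 1) = ε * (1 + ε) ^ m := by
    simp only [bucketCap, Nat.add_sub_cancel, pow_succ]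
    ring
  have hfac : max 0 (1 - 5 * ε) * ((1 + ε) + ε * (1 + ε) ^ 2) ≤ 1 := by
    rcases max_cases 0 (1 - 5 * ε) with ⟨h, -⟩ | ⟨h, -⟩ <;> rw [h]
    · norm_num
    · nlinarith [pow_pos hε 2, pow_pos hε 3, pow_pos hε 4]
  rw [hcap]
  calc max 0 (1 - 5 * ε) * (ε * (1 + ε) ^ (m + 1) + ε ^ 2 * (1 + ε) ^ (m + 1 + 1))
      = (max 0 (1 - 5 * ε) * ((1 + ε) + ε * (1 + ε) ^ 2)) * (ε * (1 + ε) ^ m) := by ring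
    _ ≤ 1 * (ε * (1 + ε) ^ m) := by gcongr
    _ = ε * (1 + ε) ^ m := one_mul _

/-- As `S_0` and `S_1` are empty, `Ψ_light` is a sum over the buckets `1, …, K - 1`. -/
lemma psiLight_eq (T : ℕ) {w : Fin n → ℝ} (W : ℕ → ℝ) (p : Fin n → ℕ → ℝ) {ε : ℝ}
    (hε : ε ∈ Set.Ioo (0 : ℝ) (1/2)) (hw : ∀ i, 3 ≤ w i) (π : Fin n → ℕ) :
    psiLight T w W p ε π = ∑ k ∈ Finset.Icc 1 (Kof w ε - 1),
      ∑ i ∈ lightIn w ε π (k + 1), itemProfit T w W p Finset.univ π i := by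
  change ∑ k ∈ Finset.range (Kof w ε + 1),
      ∑ i ∈ lightIn w ε π k, itemProfit T w W p Finset.univ π i = _
  have hsub : Finset.Icc 2 (Kof w ε) ⊆ Finset.range (Kof w ε + 1) := by
    intro k hk
    simp only [Finset.mem_Icc, Finset.mem_range] at hk ⊢
    omega
  rw [← Finset.sum_subset hsub]
  · refine Finset.sum_nbij' (· - 1) (· + 1) ?_ ?_ ?_ ?_ ?_
    · intro k hk
      simp only [Finset.mem_Icc] at hk ⊢
      omega
    · intro k hk
      simp only [Finset.mem_Icc] at hk ⊢
      omega
    · intro k hk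
      simp only [Finset.mem_Icc] at hk ⊢
      omega
    · intro k hk
      simp
    · intro k hk
      simp only [Finset.mem_Icc] at hk
      rw [Nat.sub_add_cancel (by omega : 1 ≤ k)]
  · intro k hk hk'
    simp only [Finset.mem_Icc, Finset.mem_range] at hk hk'
    rw [lightIn_eq_empty hε hw π (by omega), Finset.sum_empty]

end GIK

open GIK Finset in
theorem stmt6 {n T : ℕ} (w : Fin n → ℝ) (W : ℕ → ℝ) (p : Fin n → ℕ → ℝ)
    (hw : ∀ i, 0 < w i) (hp : ∀ i t, 0 ≤ p i t)
    (hW0 : ∀ t ∈ Finset.Icc 1 T, 0 ≤ W t)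
    (hWmono : ∀ s ∈ Finset.Icc 1 T, ∀ t ∈ Finset.Icc 1 T, s ≤ t → W s ≤ W t)
    (ε : ℝ) (hε : ε ∈ Set.Ioo (0 : ℝ) (1/2))
    (hwmin : (∀ i, 3 ≤ w i) ∧ ∃ i, w i = 3)
    (πs : Fin n → ℕ) (hπs : IsPerm Finset.univ πs) :
    ∃ x : Fin n → ℕ → ℝ, LPfeasible w ε x ∧
      (1 - 5 * ε) * psiLight T w W p ε πs ≤ assignProfit T w W p ε x := by
  obtain ⟨hw3, -⟩ := hwmin
  have h0 : 0 < ε := hε.1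
  set c : ℝ := max 0 (1 - 5 * ε) with hc
  have hc0 : 0 ≤ c := le_max_left _ _
  have hc1 : c ≤ 1 := max_le zero_le_one (by linarith)
  -- Sums over `L_{k+1}` of multiples of the assignment reduce to sums over `S_{k+1}`.
  have hsum : ∀ (k : ℕ) (g : Fin n → ℝ),
      ∑ i ∈ Finset.univ.filter (fun i : Fin n => ¬ Heavy w ε (k + 1) i),
        g i * (if i ∈ lightIn w ε πs (k + 1) then c else 0)
        = c * ∑ i ∈ lightIn w ε πs (k + 1), g i := by
    intro k g
    have hsub : lightIn w ε πs (k + 1) ⊆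
        Finset.univ.filter (fun i : Fin n => ¬ Heavy w ε (k + 1) i) := by
      intro i hi
      exact Finset.mem_filter.2 ⟨Finset.mem_univ _, (Finset.mem_filter.1 hi).2.1⟩
    rw [← Finset.sum_subset hsub, Finset.mul_sum]
    · refine Finset.sum_congr rfl fun i hi => ?_
      rw [if_pos hi, mul_comm]
    · intro i _ hi
      rw [if_neg hi, mul_zero]
  refine ⟨fun i k => if i ∈ lightIn w ε πs (k + 1) then c else 0, ⟨?_, ?_, ?_⟩, ?_⟩
  · intro i k _ _
    dsimp only
    split_ifs
    · exact hc0
    · exact le_rfl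
  · intro i
    by_cases hex : ∃ k, i ∈ lightIn w ε πs (k + 1)
    · obtain ⟨k, hk⟩ := hex
      refine le_trans (Finset.sum_le_sum (g := fun l => if l = k then c else 0) ?_) ?_
      · intro l _
        dsimp only
        by_cases hl : i ∈ lightIn w ε πs (l + 1)
        · have := inInterval_succ_unique h0 (Finset.mem_filter.1 hl).2.2
            (Finset.mem_filter.1 hk).2.2
          rw [if_pos hl, if_pos this]
        · rw [if_neg hl]
          split_ifs
          · exact hc0
          · exact le_rfl
      · rw [Finset.sum_ite_eq']
        split_ifs
        · exact hc1
        · exact zero_le_one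
    · rw [Finset.sum_eq_zero]
      · exact zero_le_one
      · intro k _
        exact if_neg fun h => hex ⟨k, h⟩
  · intro k hk
    rw [hsum]
    exact (mul_le_mul_of_nonneg_left (sum_lightIn_le h0 hw hπs k) hc0).trans
      (scaled_weight_le_bucketCap h0 (Finset.mem_Icc.1 hk).1)
  · have hpsi := psiLight_eq T W p hε hw3 πs
    have hnn : 0 ≤ psiLight T w W p ε πs := by
      rw [hpsi]
      exact Finset.sum_nonneg fun k _ => Finset.sum_nonneg fun i _ =>
        itemProfit_nonneg T w W p _ πs i
    refine (mul_le_mul_of_nonneg_right (le_max_right 0 (1 - 5 * ε)) hnn).trans ?_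
    rw [← hc, hpsi, Finset.mul_sum]
    refine Finset.sum_le_sum fun k _ => ?_
    rw [hsum k (fun i => qProfit T W p ε i k)]
    refine mul_le_mul_of_nonneg_left (Finset.sum_le_sum fun i hi => ?_) hc0
    exact itemProfit_le_qProfit T w W p ε _ πs i k
      (inInterval_succ.1 (Finset.mem_filter.1 hi).2.2).1.le
end
end

section
/- Let S be a feasible chain for I = (N, W), let G ⊆ N, and set 𝒢 = S|_G. Then S|_{N∖G} is a feasible chain for the residual instance I^{−𝒢} with profit Φ(S|_{N∖G}) = Φ(S) − Φ(𝒢). Moreover, if S maximizes Φ among all feasible chains for I, then S|_{N∖G} maximizes Φ among all feasible chains for I^{−𝒢}. -/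
/-!
Profit is additive over disjoint chains: if no item of a chain `A` ever occurs in a chain `B`,
then the items newly inserted by `A ∪ B` in period `t` are the disjoint union of those newly
inserted by `A` and by `B` (`GIK.chainProfit_union`). Applied to `S|_G` and `S|_{N∖G}` this is
the profit identity. Feasibility of `S|_{N∖G}` holds because for `t ≤ τ` the weight of `S_t ∖ G`
is at most that of `S_τ ∖ G`, which is at most `W_τ - w(S_τ ∩ G)`.
For optimality, a residual chain `R` can be glued to `S|_G` to give a feasible chain for the
original instance; its profit `Φ(S|_G) + Φ(R)` is at most `Φ(S) = Φ(S|_G) + Φ(S|_{N∖G})`.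
-/


open Finset

noncomputable section
open scoped Classical

namespace GIK

lemma IsChainGIK.mono {n T : ℕ} {S : ℕ → Finset (Fin n)} (hS : IsChainGIK T S) {s t : ℕ}
    (hst : s ≤ t) (htT : t ≤ T) : S s ⊆ S t := by
  induction t, hst using Nat.le_induction with
  | base => exact subset_rfl
  | succ t _ ih => exact (ih (by omega)).trans (hS.2 t (by omega))

lemma chainProfit_union {n T : ℕ} (p : Fin n → ℕ → ℝ) (A B : ℕ → Finset (Fin n))
    (hd : ∀ s ≤ T, ∀ t ≤ T, Disjoint (A s) (B t)) :
    chainProfit T p (fun t => A t ∪ B t) = chainProfit T p A + chainProfit T p B := by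
  unfold chainProfit
  rw [← Finset.sum_add_distrib]
  refine Finset.sum_congr rfl fun t ht => ?_
  have htT : t ≤ T := (Finset.mem_Icc.mp ht).2
  have h1 := Finset.disjoint_left.mp (hd t htT (t - 1) (by omega))
  have h2 := Finset.disjoint_left.mp (hd (t - 1) (by omega) t htT)
  have hset : (A t ∪ B t) \ (A (t - 1) ∪ B (t - 1))
      = (A t \ A (t - 1)) ∪ (B t \ B (t - 1)) := by
    ext i
    have h1i := @h1 i
    have h2i := @h2 i
    simp only [Finset.mem_sdiff, Finset.mem_union]
    tauto
  rw [hset, Finset.sum_union]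
  exact (hd t htT t htT).mono Finset.sdiff_subset Finset.sdiff_subset

lemma le_resW_iff {n T : ℕ} (w : Fin n → ℝ) (W : ℕ → ℝ) (G : ℕ → Finset (Fin n)) {t : ℕ}
    (ht : t ≤ T) (x : ℝ) :
    x ≤ resW T w W G t ↔ ∀ τ ∈ Finset.Icc t T, x ≤ W τ - ∑ i ∈ G τ, w i := by
  have h : (Finset.Icc t T).Nonempty := Finset.nonempty_Icc.mpr ht
  rw [resW, dif_pos h, Finset.le_inf'_iff]

lemma IsChainGIK.union {n T : ℕ} {A B : ℕ → Finset (Fin n)} (hA : IsChainGIK T A)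
    (hB : IsChainGIK T B) : IsChainGIK T (fun t => A t ∪ B t) :=
  ⟨by simp [hA.1, hB.1], fun t ht => Finset.union_subset_union (hA.2 t ht) (hB.2 t ht)⟩

/-- A chain `A` and a residual chain `R` for `A` never share an item, even at different
periods, since `R` avoids the last and largest set of `A`. -/
lemma ResFeasibleChain.disjoint {n T : ℕ} {w : Fin n → ℝ} {W : ℕ → ℝ}
    {A R : ℕ → Finset (Fin n)} (hA : IsChainGIK T A) (hR : ResFeasibleChain T w W A R) :
    ∀ s ≤ T, ∀ t ≤ T, Disjoint (A s) (R t) := by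
  intro s hs t ht
  rcases Nat.eq_zero_or_pos t with rfl | hpos
  · simp [hR.1.1]
  · exact ((hR.2.1 t (Finset.mem_Icc.mpr ⟨hpos, ht⟩)).mono_right (hA.mono hs le_rfl)).symm

lemma ResFeasibleChain.union_feasible {n T : ℕ} {w : Fin n → ℝ} {W : ℕ → ℝ}
    {A R : ℕ → Finset (Fin n)} (hA : IsChainGIK T A) (hR : ResFeasibleChain T w W A R) :
    FeasibleChain T w W (fun t => A t ∪ R t) := by
  refine ⟨hA.union hR.1, fun t ht => ?_⟩
  have htT := (Finset.mem_Icc.mp ht).2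
  have h := (le_resW_iff w W A htT _).mp (hR.2.2 t ht) t (Finset.mem_Icc.mpr ⟨le_rfl, htT⟩)
  rw [Finset.sum_union (hR.disjoint hA t htT t htT)]
  linarith

end GIK

open GIK Finset in
theorem stmt11 {n T : ℕ} (w : Fin n → ℝ) (W : ℕ → ℝ) (p : Fin n → ℕ → ℝ)
    (hw : ∀ i, 0 < w i)
    (S : ℕ → Finset (Fin n)) (hS : FeasibleChain T w W S)
    (G : Finset (Fin n)) :
    ResFeasibleChain T w W (fun t => S t ∩ G) (fun t => S t \ G) ∧
    chainProfit T p (fun t => S t \ G)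
      = chainProfit T p S - chainProfit T p (fun t => S t ∩ G) ∧
    ((∀ S', FeasibleChain T w W S' → chainProfit T p S' ≤ chainProfit T p S) →
      ∀ R, ResFeasibleChain T w W (fun t => S t ∩ G) R →
        chainProfit T p R ≤ chainProfit T p (fun t => S t \ G)) := by
  have hA : IsChainGIK T (fun t => S t ∩ G) :=
    ⟨by simp [hS.1.1], fun t ht => Finset.inter_subset_inter (hS.1.2 t ht) subset_rfl⟩
  have hR : ResFeasibleChain T w W (fun t => S t ∩ G) (fun t => S t \ G) := by
    refine ⟨⟨by simp [hS.1.1], fun t ht => Finset.sdiff_subset_sdiff (hS.1.2 t ht) subset_rfl⟩,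
      fun t _ => Finset.sdiff_disjoint.mono_right Finset.inter_subset_right, fun t ht => ?_⟩
    have ht' := Finset.mem_Icc.mp ht
    refine (le_resW_iff w W _ ht'.2 _).mpr fun τ hτ => ?_
    have hτ' := Finset.mem_Icc.mp hτ
    have h1 : ∑ i ∈ S t \ G, w i ≤ ∑ i ∈ S τ \ G, w i :=
      Finset.sum_le_sum_of_subset_of_nonneg
        (Finset.sdiff_subset_sdiff (hS.1.mono hτ'.1 hτ'.2) subset_rfl)
        fun i _ _ => (hw i).le
    have h2 := hS.2 τ (Finset.mem_Icc.mpr ⟨ht'.1.trans hτ'.1, hτ'.2⟩)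
    have h3 := Finset.sum_inter_add_sum_sdiff (S τ) G w
    linarith
  have hsplit : chainProfit T p S
      = chainProfit T p (fun t => S t ∩ G) + chainProfit T p (fun t => S t \ G) := by
    rw [← chainProfit_union p _ _ (hR.disjoint hA)]
    congr 1
    funext t
    ext i
    simp only [Finset.mem_union, Finset.mem_inter, Finset.mem_sdiff]
    tauto
  refine ⟨hR, by linarith, fun hmax R hRes => ?_⟩
  have h := hmax _ (hRes.union_feasible hA)
  rw [chainProfit_union p _ _ (hRes.disjoint hA)] at h
  linarith
end
end
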